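/- arXiv:1711.11220 — 3 statements merged into one kernel-verified Lean document; each statement's English description precedes it below -/
import Mathlib

section
/- Let x_1, …, x_n be points in ℝ^p, let L be a d-dimensional linear subspace of ℝ^p with d < p, and suppose the points satisfy the general position assumption (Assumption 1). If B is a set of at most p distinct data points that is linearly dependent but every proper subset of B is linearly independent (a minimal linearly dependent set), then B consists of exactly d+1 points, all of which lie in L, and the linear span of B equals L. -/
/-!
The subset `F` of points of `B` lying in `L` has at least `d + 1` elements, since otherwise general
position would make `B` independent. As `dim L = d`, `F` is dependent, so minimality forces `F = B`,
that is, `B ⊆ L`. Deleting one point of `B` leaves an independent family in `L`, of size at most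
`d`; hence `B` has exactly `d + 1` points, and the remaining `d` independent points span `L`.
-/

/-- The dimension of the span, with the family written as an image of a finset. -/
lemma finrank_span_image_of_linearIndependent {n p : ℕ} (x : Fin n → (Fin p → ℝ))
    (s : Finset (Fin n)) (h : LinearIndependent ℝ (fun i : ↑s => x (i : Fin n))) :
    Module.finrank ℝ (Submodule.span ℝ (x '' ↑s)) = s.card := by
  have h1 := finrank_span_eq_card h
  have h2 : Set.range (fun i : ↑s => x (i : Fin n)) = x '' ↑s := by
    ext y
    simp
  rw [h2] at h1
  simpa using h1

/-- Under the general position assumption (Assumption 1), a minimal linearly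
dependent set of at most `p` distinct data points consists of exactly `d+1` points, all lying
in `L`, and its linear span equals `L`. -/
theorem ransac_stmt7 {n p d : ℕ} (x : Fin n → (Fin p → ℝ))
    (L : Submodule ℝ (Fin p → ℝ)) [DecidablePred (· ∈ L)]
    (hL : Module.finrank ℝ L = d) (hdp : d < p)
    (hgen : ∀ s : Finset (Fin n), s.card ≤ p → Set.InjOn x ↑s →
      (s.filter (fun i => x i ∈ L)).card < d + 1 →
      LinearIndependent ℝ (fun i : ↑s => x (i : Fin n)))
    (B : Finset (Fin n)) (hBp : B.card ≤ p) (hinj : Set.InjOn x ↑B)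
    (hdep : ¬ LinearIndependent ℝ (fun i : ↑B => x (i : Fin n)))
    (hmin : ∀ s : Finset (Fin n), s ⊂ B → LinearIndependent ℝ (fun i : ↑s => x (i : Fin n))) :
    B.card = d + 1 ∧ (∀ i ∈ B, x i ∈ L) ∧ Submodule.span ℝ (x '' ↑B) = L := by
  classical
  have hspan : ∀ s : Finset (Fin n), (∀ i ∈ s, x i ∈ L) → Submodule.span ℝ (x '' ↑s) ≤ L := by
    intro s hs
    rw [Submodule.span_le]
    rintro _ ⟨i, hi, rfl⟩
    exact hs i hi
  have hcard : ∀ s : Finset (Fin n), (∀ i ∈ s, x i ∈ L) →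
      LinearIndependent ℝ (fun i : ↑s => x (i : Fin n)) → s.card ≤ d := by
    intro s hs hi
    rw [← finrank_span_image_of_linearIndependent x s hi, ← hL]
    exact Submodule.finrank_mono (hspan s hs)
  have hF : d + 1 ≤ (B.filter (fun i => x i ∈ L)).card := by
    by_contra! h
    exact hdep (hgen B hBp hinj h)
  have hFB : B.filter (fun i => x i ∈ L) = B := by
    by_contra hne
    have h := hcard _ (fun i hi => (Finset.mem_filter.1 hi).2)
      (hmin _ ((Finset.filter_subset _ _).ssubset_of_ne hne))
    omega
  have hBL : ∀ i ∈ B, x i ∈ L := Finset.filter_eq_self.1 hFB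
  rw [hFB] at hF
  obtain ⟨i, hi⟩ : B.Nonempty := Finset.card_pos.1 (by omega)
  have hEL : ∀ j ∈ B.erase i, x j ∈ L := fun j hj => hBL j (Finset.mem_of_mem_erase hj)
  have hE := hmin _ (Finset.erase_ssubset hi)
  have hEcard := hcard _ hEL hE
  have hadd := Finset.card_erase_add_one hi
  have hEspan : Submodule.span ℝ (x '' ↑(B.erase i)) = L := by
    apply Submodule.eq_of_le_of_finrank_eq (hspan _ hEL)
    rw [finrank_span_image_of_linearIndependent x _ hE, hL]
    omega
  refine ⟨by omega, hBL, le_antisymm (hspan B hBL) ?_⟩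
  rw [← hEspan]
  exact Submodule.span_mono (Set.image_mono (Finset.coe_subset.2 (Finset.erase_subset i B)))
end

section
/- For every real τ with 0 < τ < 1 there exists a constant c > 0, depending only on τ, with the following property: for all positive integers d, p, m, n satisfying n > p, m/n ≥ d/p, d/p ≤ τ, and p/n ≤ τ, the quantity θ_2 = Σ_{k=d+1}^{p} C(m, k)·C(n−m, p−k) / C(n, p) satisfies θ_2 ≥ c. -/
/-!
Up to the factor `C(n, p)`, the weights `w k = C(m, k) C(n - m, p - k)` are the law of a
hypergeometric variable `X` with mean `μ = m p / n ≥ d`. Hence `X > μ` forces `X ≥ d + 1`, and it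
suffices to bound `P(X > μ)` from below.

The ratio of consecutive weights gives a Stein identity (`hypergeom_stein`): with `Y = X - μ`,
`n E[Y G(X)] = E[(m - X)(p - X)(G(X + 1) - G(X))]`. Since `0 ≤ (m - X)(p - X) ≤ m p` on the
support, taking `G = 1, Y, Y³` yields `E Y = 0`, `μ (1 - p/n)(1 - m/n) ≤ E Y² ≤ μ` and
`E Y⁴ ≤ μ (3 E Y² + 1)`.

If `m / n` is bounded away from `1`, then `E Y² ≥ a μ` for a constant `a = a(τ) > 0`, while
`E Y⁴ ≤ 4 μ²` because `μ ≥ d ≥ 1`. The fourth moment method then bounds `P(Y > 0)`: a quartic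
polynomial in `Y / √μ` which is nonpositive for `Y ≤ 0` and bounded above (`quartic_le`) has
expectation bounded below. If `m / n` is close to `1`, Markov's inequality for `p - X` gives
`P(X > d) ≥ 1/2`. Finally, for `m > n` the truncated difference `n - m` is `0`, and the summand
`k = p` alone is at least `C(n, p)`.
-/

/-! ### Hypergeometric weights and the Stein identity -/

/-- The unnormalised hypergeometric weight: the number of `p`-subsets of an `(m + N)`-set that
meet a fixed `m`-subset in exactly `k` elements (for `k ≤ p`). -/
noncomputable def hyperWeight (m N p k : ℕ) : ℝ := (m.choose k : ℝ) * (N.choose (p - k) : ℝ)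

lemma hyperWeight_nonneg (m N p k : ℕ) : 0 ≤ hyperWeight m N p k := by
  unfold hyperWeight; positivity

lemma choose_mul_sub_cast (m k : ℕ) :
    (m.choose k : ℝ) * ((m : ℝ) - k) = (m.choose (k + 1) : ℝ) * ((k : ℝ) + 1) := by
  rcases le_or_gt k m with h | h
  · have := Nat.choose_succ_right_eq m k
    rw [← Nat.cast_sub h]
    exact_mod_cast this.symm
  · simp [Nat.choose_eq_zero_of_lt h, Nat.choose_eq_zero_of_lt (Nat.lt_succ_of_lt h)]

lemma hyperWeight_succ (m N p k : ℕ) (hk : k < p) :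
    hyperWeight m N p k * (((m : ℝ) - k) * ((p : ℝ) - k)) =
      hyperWeight m N p (k + 1) * (((k : ℝ) + 1) * ((N : ℝ) - p + (k + 1))) := by
  obtain ⟨j, rfl⟩ : ∃ j, p = k + 1 + j := ⟨p - (k + 1), by omega⟩
  have h1 := choose_mul_sub_cast m k
  have h2 := choose_mul_sub_cast N j
  have e1 : k + 1 + j - k = j + 1 := by omega
  have e2 : k + 1 + j - (k + 1) = j := by omega
  unfold hyperWeight
  rw [e1, e2]
  push_cast
  linear_combination ((N.choose (j + 1) : ℝ) * (j + 1)) * h1 -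
    ((m.choose (k + 1) : ℝ) * (k + 1)) * h2

lemma hyperWeight_sum (m N p : ℕ) :
    ∑ k ∈ Finset.range (p + 1), hyperWeight m N p k = ((m + N).choose p : ℝ) := by
  rw [Nat.add_choose_eq, Finset.Nat.sum_antidiagonal_eq_sum_range_succ_mk]
  push_cast
  rfl

/-- Stein identity for the hypergeometric law: the detailed-balance relation `hyperWeight_succ`
summed by parts. -/
lemma hypergeom_stein (m N p : ℕ) (G : ℝ → ℝ) :
    ∑ k ∈ Finset.range (p + 1), hyperWeight m N p k *
        (((m : ℝ) - k) * ((p : ℝ) - k) * (G (k + 1) - G k)) =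
      ∑ k ∈ Finset.range (p + 1), hyperWeight m N p k *
        ((((m : ℝ) + N) * k - m * p) * G k) := by
  have key : ∑ k ∈ Finset.range (p + 1), hyperWeight m N p k *
        (((m : ℝ) - k) * ((p : ℝ) - k)) * G (k + 1) =
      ∑ k ∈ Finset.range (p + 1), hyperWeight m N p k *
        ((k : ℝ) * ((N : ℝ) - p + k)) * G k := by
    rw [Finset.sum_range_succ, Finset.sum_range_succ']
    simp only [sub_self, mul_zero, zero_mul, add_zero, Nat.cast_zero]
    refine Finset.sum_congr rfl fun k hk => ?_
    rw [hyperWeight_succ m N p k (Finset.mem_range.1 hk)]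
    push_cast
    ring
  rw [← sub_eq_zero, ← Finset.sum_sub_distrib] at key ⊢
  rw [← key]
  refine Finset.sum_congr rfl fun k _ => ?_
  ring

lemma hyperWeight_drift_nonneg (m N p k : ℕ) (hk : k ≤ p) :
    0 ≤ hyperWeight m N p k * (((m : ℝ) - k) * ((p : ℝ) - k)) := by
  rcases le_or_gt k m with h | h
  · have h1 : (k : ℝ) ≤ m := by exact_mod_cast h
    have h2 : (k : ℝ) ≤ p := by exact_mod_cast hk
    exact mul_nonneg (hyperWeight_nonneg _ _ _ _)
      (mul_nonneg (by linarith) (by linarith))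
  · simp [hyperWeight, Nat.choose_eq_zero_of_lt h]

lemma hyperWeight_drift_le (m N p k : ℕ) (hk : k ≤ p) :
    hyperWeight m N p k * (((m : ℝ) - k) * ((p : ℝ) - k)) ≤
      hyperWeight m N p k * ((m : ℝ) * p) := by
  rcases le_or_gt k m with h | h
  · have h1 : (k : ℝ) ≤ m := by exact_mod_cast h
    have h2 : (k : ℝ) ≤ p := by exact_mod_cast hk
    have h0 : (0 : ℝ) ≤ k := Nat.cast_nonneg k
    exact mul_le_mul_of_nonneg_left
      (mul_le_mul (by linarith) (by linarith) (by linarith) (by linarith))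
      (hyperWeight_nonneg _ _ _ _)
  · simp [hyperWeight, Nat.choose_eq_zero_of_lt h]

/-- The Stein identity in centred form; `μ` is the mean `m p / n`. -/
lemma hyper_stein_centered (m N p : ℕ) (n μ : ℝ) (hn : n = (m : ℝ) + N) (hμ : n * μ = m * p)
    (G : ℝ → ℝ) :
    n * ∑ k ∈ Finset.range (p + 1), hyperWeight m N p k * (((k : ℝ) - μ) * G k) =
      ∑ k ∈ Finset.range (p + 1), hyperWeight m N p k *
        (((m : ℝ) - k) * ((p : ℝ) - k)) * (G (k + 1) - G k) := by
  have := hypergeom_stein m N p G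
  simp only [← mul_assoc] at this ⊢
  rw [this, Finset.mul_sum]
  refine Finset.sum_congr rfl fun k _ => ?_
  rw [← hn]
  linear_combination (- hyperWeight m N p k * G k) * hμ

/-! ### Central moments -/

lemma hyper_first_moment (m N p : ℕ) (n μ : ℝ) (hn : n = (m : ℝ) + N) (hn0 : 0 < n)
    (hμ : n * μ = m * p) :
    ∑ k ∈ Finset.range (p + 1), hyperWeight m N p k * ((k : ℝ) - μ) = 0 := by
  have h := hyper_stein_centered m N p n μ hn hμ (fun _ => 1)
  simp only [mul_one, sub_self, mul_zero, Finset.sum_const_zero] at h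
  exact (mul_eq_zero.1 h).resolve_left hn0.ne'

lemma hyper_second_moment (m N p : ℕ) (n μ : ℝ) (hn : n = (m : ℝ) + N)
    (hμ : n * μ = m * p) :
    n * ∑ k ∈ Finset.range (p + 1), hyperWeight m N p k * ((k : ℝ) - μ) ^ 2 =
      ∑ k ∈ Finset.range (p + 1), hyperWeight m N p k * (((m : ℝ) - k) * ((p : ℝ) - k)) := by
  have h := hyper_stein_centered m N p n μ hn hμ (fun x => x - μ)
  convert h using 2
  · refine Finset.sum_congr rfl fun k _ => ?_
    ring
  · ring

lemma hyper_second_moment_le (m N p : ℕ) (n μ : ℝ) (hn : n = (m : ℝ) + N) (hn0 : 0 < n)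
    (hμ : n * μ = m * p) :
    ∑ k ∈ Finset.range (p + 1), hyperWeight m N p k * ((k : ℝ) - μ) ^ 2 ≤
      μ * ((m + N).choose p : ℝ) := by
  refine le_of_mul_le_mul_left ?_ hn0
  rw [hyper_second_moment m N p n μ hn hμ, ← hyperWeight_sum, ← mul_assoc, hμ, Finset.mul_sum]
  refine Finset.sum_le_sum fun k hk => ?_
  rw [mul_comm ((m : ℝ) * p)]
  exact hyperWeight_drift_le m N p k (Nat.lt_succ_iff.1 (Finset.mem_range.1 hk))

lemma hyper_second_moment_ge (m N p : ℕ) (n μ : ℝ) (hn : n = (m : ℝ) + N) (hn0 : 0 < n)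
    (hμ : n * μ = m * p) :
    ((m : ℝ) - μ) * (p - μ) * ((m + N).choose p : ℝ) ≤
      n * ∑ k ∈ Finset.range (p + 1), hyperWeight m N p k * ((k : ℝ) - μ) ^ 2 := by
  rw [hyper_second_moment m N p n μ hn hμ]
  have h1 := hyper_first_moment m N p n μ hn hn0 hμ
  have h0 : 0 ≤ ∑ k ∈ Finset.range (p + 1), hyperWeight m N p k * ((k : ℝ) - μ) ^ 2 :=
    Finset.sum_nonneg fun k _ => mul_nonneg (hyperWeight_nonneg _ _ _ _) (sq_nonneg _)
  -- Expand `(m - k)(p - k)` around `k = μ`; the linear term has mean zero.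
  have e : ∑ k ∈ Finset.range (p + 1), hyperWeight m N p k * (((m : ℝ) - k) * ((p : ℝ) - k)) =
      ((m : ℝ) - μ) * (p - μ) * ∑ k ∈ Finset.range (p + 1), hyperWeight m N p k
      - (m + p - 2 * μ) * ∑ k ∈ Finset.range (p + 1), hyperWeight m N p k * ((k : ℝ) - μ)
      + ∑ k ∈ Finset.range (p + 1), hyperWeight m N p k * ((k : ℝ) - μ) ^ 2 := by
    rw [Finset.mul_sum, Finset.mul_sum, ← Finset.sum_sub_distrib, ← Finset.sum_add_distrib]
    refine Finset.sum_congr rfl fun k _ => ?_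
    ring
  rw [e, h1, hyperWeight_sum]
  linarith

lemma hyper_fourth_moment_le (m N p : ℕ) (n μ : ℝ) (hn : n = (m : ℝ) + N) (hn0 : 0 < n)
    (hμ : n * μ = m * p) (hμ1 : 1 ≤ μ) :
    ∑ k ∈ Finset.range (p + 1), hyperWeight m N p k * ((k : ℝ) - μ) ^ 4 ≤
      4 * μ ^ 2 * ((m + N).choose p : ℝ) := by
  have h1 := hyper_first_moment m N p n μ hn hn0 hμ
  have h2 := hyper_second_moment_le m N p n μ hn hn0 hμ
  have h := hyper_stein_centered m N p n μ hn hμ (fun x => (x - μ) ^ 3)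
  have hle : ∑ k ∈ Finset.range (p + 1), hyperWeight m N p k *
        (((m : ℝ) - k) * ((p : ℝ) - k)) * (((k : ℝ) + 1 - μ) ^ 3 - ((k : ℝ) - μ) ^ 3) ≤
      ∑ k ∈ Finset.range (p + 1), hyperWeight m N p k * (n * μ) *
        (((k : ℝ) + 1 - μ) ^ 3 - ((k : ℝ) - μ) ^ 3) := by
    refine Finset.sum_le_sum fun k hk => ?_
    rw [hμ]
    refine mul_le_mul_of_nonneg_right
      (hyperWeight_drift_le m N p k (Nat.lt_succ_iff.1 (Finset.mem_range.1 hk))) ?_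
    nlinarith [sq_nonneg (2 * ((k : ℝ) - μ) + 1)]
  have e : ∑ k ∈ Finset.range (p + 1), hyperWeight m N p k * (n * μ) *
        (((k : ℝ) + 1 - μ) ^ 3 - ((k : ℝ) - μ) ^ 3) =
      n * (μ * (3 * ∑ k ∈ Finset.range (p + 1), hyperWeight m N p k * ((k : ℝ) - μ) ^ 2
        + 3 * ∑ k ∈ Finset.range (p + 1), hyperWeight m N p k * ((k : ℝ) - μ)
        + ∑ k ∈ Finset.range (p + 1), hyperWeight m N p k)) := by
    simp only [Finset.mul_sum, ← Finset.sum_add_distrib]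
    refine Finset.sum_congr rfl fun k _ => ?_
    ring
  rw [← h, e, h1, hyperWeight_sum] at hle
  have h3 := le_of_mul_le_mul_left hle hn0
  have e4 : ∑ k ∈ Finset.range (p + 1), hyperWeight m N p k * ((k : ℝ) - μ) ^ 4 =
      ∑ k ∈ Finset.range (p + 1), hyperWeight m N p k * (((k : ℝ) - μ) * ((k : ℝ) - μ) ^ 3) :=
    Finset.sum_congr rfl fun k _ => by ring
  rw [e4]
  have hW : (0 : ℝ) ≤ ((m + N).choose p : ℝ) := Nat.cast_nonneg _
  have hWμ : ((m + N).choose p : ℝ) ≤ μ * ((m + N).choose p : ℝ) := by nlinarith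
  calc _ ≤ _ := h3
    _ ≤ μ * (3 * (μ * ((m + N).choose p : ℝ)) + 3 * 0 + μ * ((m + N).choose p : ℝ)) := by
        gcongr
    _ = _ := by ring

/-! ### The fourth moment method -/

/-- The test polynomial of the fourth moment method is dominated by `8 K² · 1{y > 0}`. -/
lemma quartic_le (K y : ℝ) (hK : 1 ≤ K) :
    2 * K * y + y ^ 2 - y ^ 4 / (2 * K) ≤ if 0 < y then 8 * K ^ 2 else 0 := by
  have hK0 : 0 < 2 * K := by linarith
  have hy4 : 0 ≤ y ^ 4 / (2 * K) := by positivity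
  rcases le_or_gt (|y|) (2 * K) with h | h
  · obtain ⟨h1, h2⟩ := abs_le.1 h
    split_ifs with hy
    · nlinarith
    · nlinarith
  · -- For `|y| > 2 K ≥ 2` the quartic term dominates, as `y ^ 4 / (2 K) ≥ 2 K y² ≥ 2 y²`.
    have hy2 : (2 * K) ^ 2 ≤ y ^ 2 := by
      rw [← sq_abs y]; exact pow_le_pow_left₀ hK0.le h.le 2
    have h4 : 2 * K * y ^ 2 ≤ y ^ 4 / (2 * K) := by
      rw [le_div_iff₀ hK0]
      nlinarith [mul_le_mul_of_nonneg_right hy2 (sq_nonneg y)]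
    have h5 : 2 * y ^ 2 ≤ 2 * K * y ^ 2 := by nlinarith [sq_nonneg y]
    have h6 : 2 * K * y ≤ y ^ 2 := by
      nlinarith [le_abs_self y, abs_nonneg y, sq_abs y]
    have h7 : 2 * K * y + y ^ 2 - y ^ 4 / (2 * K) ≤ 0 := by linarith
    split_ifs
    · exact h7.trans (by positivity)
    · exact h7

/-- Fourth moment method for a finite weighted sum: if the centred variable `Y` has variance at
least `a μ` and fourth moment at most `4 μ²`, then `Y > 0` has mass bounded below. -/
lemma fourth_moment_method (s : Finset ℕ) (w Y : ℕ → ℝ) (hw : ∀ k, 0 ≤ w k)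
    (W μ a : ℝ) (hμ : 0 < μ) (ha : 0 < a) (ha1 : a ≤ 1)
    (h1 : ∑ k ∈ s, w k * Y k = 0)
    (h2 : a * μ * W ≤ ∑ k ∈ s, w k * Y k ^ 2)
    (h4 : ∑ k ∈ s, w k * Y k ^ 4 ≤ 4 * μ ^ 2 * W) :
    a ^ 3 / 256 * W ≤ ∑ k ∈ s, w k * (if 0 < Y k then 1 else 0) := by
  obtain ⟨v, hv, rfl⟩ : ∃ v : ℝ, 0 < v ∧ v ^ 2 = μ :=
    ⟨√μ, Real.sqrt_pos.2 hμ, Real.sq_sqrt hμ.le⟩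
  -- `K = 4 / a` makes the quartic term cost exactly half of the variance.
  have hK : 1 ≤ 4 / a := by rw [le_div_iff₀ ha]; linarith
  have key : ∑ k ∈ s, w k * (2 * (4 / a) * (Y k / v) + (Y k / v) ^ 2
        - (Y k / v) ^ 4 / (2 * (4 / a))) ≤
      ∑ k ∈ s, w k * (if 0 < Y k then 8 * (4 / a) ^ 2 else 0) := by
    refine Finset.sum_le_sum fun k _ => mul_le_mul_of_nonneg_left ?_ (hw k)
    simpa only [div_pos_iff_of_pos_right hv] using quartic_le (4 / a) (Y k / v) hK
  have e1 : ∑ k ∈ s, w k * (2 * (4 / a) * (Y k / v) + (Y k / v) ^ 2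
        - (Y k / v) ^ 4 / (2 * (4 / a))) =
      (2 * (4 / a) / v) * ∑ k ∈ s, w k * Y k + (1 / v ^ 2) * ∑ k ∈ s, w k * Y k ^ 2
        - (a / 8 / v ^ 4) * ∑ k ∈ s, w k * Y k ^ 4 := by
    simp only [Finset.mul_sum, ← Finset.sum_add_distrib, ← Finset.sum_sub_distrib]
    refine Finset.sum_congr rfl fun k _ => ?_
    field_simp
    ring
  have e2 : ∑ k ∈ s, w k * (if 0 < Y k then 8 * (4 / a) ^ 2 else 0) =
      (128 / a ^ 2) * ∑ k ∈ s, w k * (if 0 < Y k then 1 else 0) := by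
    rw [Finset.mul_sum]
    refine Finset.sum_congr rfl fun k _ => ?_
    split_ifs
    · field_simp
      ring
    · simp
  rw [e1, e2, h1] at key
  have b2 : a * W ≤ (1 / v ^ 2) * ∑ k ∈ s, w k * Y k ^ 2 := by
    calc a * W = (1 / v ^ 2) * (a * v ^ 2 * W) := by field_simp
      _ ≤ _ := by gcongr
  have b4 : (a / 8 / v ^ 4) * ∑ k ∈ s, w k * Y k ^ 4 ≤ a / 2 * W := by
    calc _ ≤ (a / 8 / v ^ 4) * (4 * (v ^ 2) ^ 2 * W) := by gcongr
      _ = _ := by field_simp; ring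
  have hfin : a / 2 * W ≤ (128 / a ^ 2) * ∑ k ∈ s, w k * (if 0 < Y k then 1 else 0) := by
    linarith
  calc a ^ 3 / 256 * W = a ^ 2 / 128 * (a / 2 * W) := by ring
    _ ≤ a ^ 2 / 128 * ((128 / a ^ 2) * ∑ k ∈ s, w k * (if 0 < Y k then 1 else 0)) := by gcongr
    _ = _ := by field_simp

/-! ### Tail bounds -/

lemma hyper_tail_eq (m N p d : ℕ) :
    ∑ k ∈ Finset.Icc (d + 1) p, hyperWeight m N p k =
      ∑ k ∈ Finset.range (p + 1), hyperWeight m N p k * (if d < k then 1 else 0) := by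
  simp only [mul_ite, mul_one, mul_zero]
  rw [← Finset.sum_filter]
  refine Finset.sum_congr ?_ fun _ _ => rfl
  ext k
  simp only [Finset.mem_Icc, Finset.mem_filter, Finset.mem_range]
  omega

/-- The tail bound when `m / n` is bounded away from `1`. -/
lemma hyper_tail_moderate (m N p d : ℕ) (n μ τ : ℝ) (hn : n = (m : ℝ) + N) (hn0 : 0 < n)
    (hμ : n * μ = m * p) (hτ0 : 0 < τ) (hτ1 : τ < 1) (hd : 1 ≤ d) (hdμ : (d : ℝ) ≤ μ)
    (hp : (p : ℝ) ≤ τ * n) (hm : (m : ℝ) ≤ (1 + τ) / 2 * n) :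
    ((1 - τ) ^ 2 / 2) ^ 3 / 256 * ((m + N).choose p : ℝ) ≤
      ∑ k ∈ Finset.Icc (d + 1) p, hyperWeight m N p k := by
  have hd1 : (1 : ℝ) ≤ d := by exact_mod_cast hd
  have hμ1 : 1 ≤ μ := hd1.trans hdμ
  have hvar : (1 - τ) ^ 2 / 2 * μ * ((m + N).choose p : ℝ) ≤
      ∑ k ∈ Finset.range (p + 1), hyperWeight m N p k * ((k : ℝ) - μ) ^ 2 := by
    refine le_of_mul_le_mul_left (le_trans ?_
      (hyper_second_moment_ge m N p n μ hn hn0 hμ)) hn0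
    rw [← mul_assoc]
    refine mul_le_mul_of_nonneg_right ?_ (Nat.cast_nonneg _)
    -- `n (m - μ)(p - μ) = μ (n - p)(n - m)`.
    refine le_of_mul_le_mul_left ?_ hn0
    have e : n * (((m : ℝ) - μ) * (p - μ)) = μ * ((n - p) * (n - m)) := by
      linear_combination (μ - n) * hμ
    rw [e]
    have h3 : ((1 - τ) * n) * ((1 - τ) / 2 * n) ≤ (n - p) * (n - m) := by
      have hb : 0 ≤ (1 - τ) / 2 * n := by
        have : 0 < 1 - τ := by linarith
        positivity
      exact mul_le_mul (by linarith) (by linarith) hb (by nlinarith)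
    calc _ = μ * (((1 - τ) * n) * ((1 - τ) / 2 * n)) := by ring
      _ ≤ _ := by gcongr
  have h := fourth_moment_method (Finset.range (p + 1)) (hyperWeight m N p)
    (fun k => (k : ℝ) - μ) (hyperWeight_nonneg m N p) ((m + N).choose p : ℝ) μ
    ((1 - τ) ^ 2 / 2) (by linarith) (by have : 0 < 1 - τ := by linarith
                                        positivity) (by nlinarith)
    (hyper_first_moment m N p n μ hn hn0 hμ) hvar
    (hyper_fourth_moment_le m N p n μ hn hn0 hμ hμ1)
  refine h.trans ?_
  rw [hyper_tail_eq]
  refine Finset.sum_le_sum fun k _ => mul_le_mul_of_nonneg_left ?_ (hyperWeight_nonneg _ _ _ _)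
  by_cases hk : 0 < (k : ℝ) - μ
  · have : d < k := by
      have : (d : ℝ) < k := by linarith
      exact_mod_cast this
    simp [hk, this]
  · rw [if_neg hk]
    split_ifs <;> norm_num

/-- The tail bound when `m / n` is close to `1`, by Markov's inequality for `p - X`. -/
lemma hyper_tail_large (m N p d : ℕ) (n μ τ : ℝ) (hn : n = (m : ℝ) + N) (hn0 : 0 < n)
    (hμ : n * μ = m * p) (hτ1 : τ < 1) (hp0 : 0 < p) (hd : (d : ℝ) ≤ τ * p)
    (hm : (1 + τ) / 2 * n ≤ (m : ℝ)) :
    1 / 2 * ((m + N).choose p : ℝ) ≤ ∑ k ∈ Finset.Icc (d + 1) p, hyperWeight m N p k := by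
  have hp : (0 : ℝ) < p := by exact_mod_cast hp0
  have hμp : (1 + τ) / 2 * p ≤ μ := by
    refine le_of_mul_le_mul_left ?_ hn0
    rw [hμ]
    nlinarith
  have hq : 0 < (1 - τ) * p := by
    have : 0 < 1 - τ := by linarith
    positivity
  have h1 := hyper_first_moment m N p n μ hn hn0 hμ
  rw [hyper_tail_eq]
  -- Markov: `1{k ≤ d} (1 - τ) p ≤ p - k` for `k ≤ p`.
  have key : ∑ k ∈ Finset.range (p + 1), hyperWeight m N p k * ((1 - τ) * p - (p - k)) ≤
      ∑ k ∈ Finset.range (p + 1), hyperWeight m N p k *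
        (((1 - τ) * p) * (if d < k then 1 else 0)) := by
    refine Finset.sum_le_sum fun k hk => mul_le_mul_of_nonneg_left ?_ (hyperWeight_nonneg _ _ _ _)
    have hkp : (k : ℝ) ≤ p := by exact_mod_cast Nat.lt_succ_iff.1 (Finset.mem_range.1 hk)
    split_ifs with h
    · linarith
    · have : (k : ℝ) ≤ d := by exact_mod_cast not_lt.1 h
      linarith
  have e1 : ∑ k ∈ Finset.range (p + 1), hyperWeight m N p k * ((1 - τ) * p - (p - k)) =
      (μ - τ * p) * ∑ k ∈ Finset.range (p + 1), hyperWeight m N p k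
        + ∑ k ∈ Finset.range (p + 1), hyperWeight m N p k * ((k : ℝ) - μ) := by
    rw [Finset.mul_sum, ← Finset.sum_add_distrib]
    exact Finset.sum_congr rfl fun k _ => by ring
  have e2 : ∑ k ∈ Finset.range (p + 1), hyperWeight m N p k *
        (((1 - τ) * p) * (if d < k then 1 else 0)) =
      ((1 - τ) * p) *
        ∑ k ∈ Finset.range (p + 1), hyperWeight m N p k * (if d < k then 1 else 0) := by
    rw [Finset.mul_sum]
    exact Finset.sum_congr rfl fun k _ => by ring
  rw [e1, e2, h1, hyperWeight_sum] at key
  refine le_of_mul_le_mul_left (le_trans ?_ key) hq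
  have hW : (0 : ℝ) ≤ ((m + N).choose p : ℝ) := Nat.cast_nonneg _
  nlinarith

/-- For every `τ ∈ (0,1)` there is `c > 0` depending only on `τ` such that for
all positive integers `d, p, m, n` with `n > p`, `m/n ≥ d/p`, `d/p ≤ τ` and `p/n ≤ τ`, the
Hardt–Moitra success probability `θ₂ = Σ_{k=d+1}^{p} C(m,k)·C(n−m,p−k)/C(n,p)` satisfies
`θ₂ ≥ c`. -/
theorem ransac_stmt11 (τ : ℝ) (hτ0 : 0 < τ) (hτ1 : τ < 1) :
    ∃ c : ℝ, 0 < c ∧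
      ∀ d p m n : ℕ, 0 < d → 0 < p → 0 < m → 0 < n →
        p < n → (d : ℝ) / (p : ℝ) ≤ (m : ℝ) / (n : ℝ) →
        (d : ℝ) / (p : ℝ) ≤ τ → (p : ℝ) / (n : ℝ) ≤ τ →
        c ≤ (∑ k ∈ Finset.Icc (d + 1) p,
              (m.choose k : ℝ) * ((n - m).choose (p - k) : ℝ)) / (n.choose p : ℝ) := by
  have hτ : 0 < 1 - τ := by linarith
  have hc0 : 0 < ((1 - τ) ^ 2 / 2) ^ 3 / 256 := by positivity
  have hc1 : ((1 - τ) ^ 2 / 2) ^ 3 / 256 ≤ 1 / 2 := by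
    have h1 : (1 - τ) ^ 2 / 2 ≤ 1 := by nlinarith
    have h2 : ((1 - τ) ^ 2 / 2) ^ 3 ≤ 1 := pow_le_one₀ (by positivity) h1
    linarith
  refine ⟨((1 - τ) ^ 2 / 2) ^ 3 / 256, hc0, ?_⟩
  intro d p m n hd hp hm hn hpn hdm hdp hpn'
  have hpR : (0 : ℝ) < p := by exact_mod_cast hp
  have hnR : (0 : ℝ) < n := by exact_mod_cast hn
  have hW : (0 : ℝ) < (n.choose p : ℝ) := by exact_mod_cast Nat.choose_pos hpn.le
  rw [div_le_iff₀ hpR] at hdp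
  rw [div_le_iff₀ hnR] at hpn'
  rw [le_div_iff₀ hW]
  change _ ≤ ∑ k ∈ Finset.Icc (d + 1) p, hyperWeight m (n - m) p k
  rcases le_or_gt m n with hmn | hmn
  · have hsum : m + (n - m) = n := by omega
    have hn' : (n : ℝ) = (m : ℝ) + ((n - m : ℕ) : ℝ) := by exact_mod_cast hsum.symm
    have hμ : (n : ℝ) * ((m : ℝ) * p / n) = m * p := by field_simp
    have hdμ : (d : ℝ) ≤ (m : ℝ) * p / n := by
      rw [div_le_iff₀ hpR] at hdm
      calc (d : ℝ) ≤ m / n * p := hdm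
        _ = _ := by ring
    rcases le_total ((m : ℝ)) ((1 + τ) / 2 * n) with h | h
    · have := hyper_tail_moderate m (n - m) p d n _ τ hn' hnR hμ hτ0 hτ1 hd hdμ hpn' h
      rwa [hsum] at this
    · have := hyper_tail_large m (n - m) p d n _ τ hn' hnR hμ hτ1 hp hdp h
      rw [hsum] at this
      exact le_trans (by gcongr) this
  · have hdp' : d < p := by
      have : (d : ℝ) < p := by nlinarith
      exact_mod_cast this
    have h1 : hyperWeight m (n - m) p p ≤
        ∑ k ∈ Finset.Icc (d + 1) p, hyperWeight m (n - m) p k :=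
      Finset.single_le_sum (fun k _ => hyperWeight_nonneg m (n - m) p k)
        (Finset.mem_Icc.2 ⟨hdp', le_rfl⟩)
    have h2 : (n.choose p : ℝ) ≤ hyperWeight m (n - m) p p := by
      simp only [hyperWeight, Nat.sub_self, Nat.choose_zero_right, Nat.cast_one, mul_one]
      exact_mod_cast Nat.choose_le_choose p hmn.le
    nlinarith
end

section
/- Let n, m, d, K be positive integers with d+1 ≤ m and K·m ≤ n. Let I_1, …, I_K be independent random variables, where I_j has the geometric distribution on the positive integers with success probability θ^{(j)} = (K−j+1) · C(m, d+1) / C(n − (j−1)·m, d+1). Then E[I_1 + ⋯ + I_K] = Σ_{j=1}^{K} 1/θ^{(j)} ≤ K · C(n, d+1)/C(m, d+1). -/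
/-!
By linearity of expectation only the mean of a single geometric variable is needed, namely
`∑ (s + 1) (1 - θ)^s θ = 1 / θ`, valid for `0 < θ ≤ 1` (`lintegral_geometric`). That
`θ⁽ʲ⁾ ≤ 1` follows from superadditivity of `a ↦ C(a, d + 1)`: at stage `j` there remain
`K - j` disjoint blocks of `m` points among `n - j m` points, so
`(K - j) C(m, d + 1) ≤ C(n - j m, d + 1)`. The upper bound holds termwise, because `K - j ≥ 1`
and `C(n - j m, d + 1) ≤ C(n, d + 1)`.
-/

open scoped ENNReal
open MeasureTheory

theorem choose_succ_superadditive (a b k : ℕ) :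
    a.choose (k + 1) + b.choose (k + 1) ≤ (a + b).choose (k + 1) := by
  induction b with
  | zero => simp
  | succ b ih =>
    rw [← Nat.add_assoc, Nat.choose_succ_succ b, Nat.choose_succ_succ (a + b)]
    have := Nat.choose_le_choose k (Nat.le_add_left b a)
    simp only [Nat.succ_eq_add_one] at *
    omega

theorem mul_choose_succ_le (c m k : ℕ) :
    c * m.choose (k + 1) ≤ (c * m).choose (k + 1) := by
  induction c with
  | zero => simp
  | succ c ih =>
    have := choose_succ_superadditive (c * m) m k
    rw [Nat.succ_mul, Nat.succ_mul]
    omega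

/-- The mean of a geometric variable on the positive integers is `1 / p`. The value of
`μ {X = 0}` is irrelevant, since it is weighted by `0`. -/
theorem lintegral_geometric {Ω : Type*} [MeasurableSpace Ω] (μ : Measure Ω) (X : Ω → ℕ)
    (hX : Measurable X) (p : ℝ) (hp0 : 0 < p) (hp1 : p ≤ 1)
    (hgeo : ∀ t : ℕ, 1 ≤ t → μ {ω | X ω = t} = ENNReal.ofReal ((1 - p) ^ (t - 1) * p)) :
    ∫⁻ ω, (X ω : ℝ≥0∞) ∂μ = ENNReal.ofReal (1 / p) := by
  have hq : 0 ≤ 1 - p := by linarith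
  have hsum : HasSum (fun s : ℕ => ((s : ℝ) + 1) * ((1 - p) ^ s * p)) (1 / p) := by
    have h := (hasSum_choose_mul_geometric_of_norm_lt_one (r := 1 - p) 1
      (by rw [Real.norm_of_nonneg hq]; linarith)).mul_right p
    convert! h using 1
    · ext s
      simp [mul_assoc]
    · rw [sub_sub_cancel]
      field_simp
  rw [← lintegral_map (f := fun t : ℕ => (t : ℝ≥0∞)) (by fun_prop) hX, lintegral_countable',
    tsum_eq_zero_add' ENNReal.summable, ← hsum.tsum_eq,
    ENNReal.ofReal_tsum_of_nonneg (fun s => by positivity) hsum.summable]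
  simp only [Nat.cast_zero, zero_mul, zero_add]
  refine tsum_congr fun s => ?_
  have h := hgeo (s + 1) (by omega)
  rw [Measure.map_apply hX (measurableSet_singleton _), ENNReal.ofReal_mul (by positivity)]
  change _ * μ {ω | X ω = s + 1} = _
  rw [h, Nat.add_sub_cancel]
  congr 1
  rw [← Nat.cast_add_one, ENNReal.ofReal_natCast]

/-- If `I_1, …, I_K` are independent, with `I_j` geometric on the positive
integers with success probability `θ⁽ʲ⁾ = (K−j+1)·C(m,d+1)/C(n−(j−1)m, d+1)`, then
`E[I_1 + ⋯ + I_K] = Σ_j 1/θ⁽ʲ⁾ ≤ K·C(n,d+1)/C(m,d+1)`.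
(Here `j : Fin K` encodes stage `j+1` of the algorithm.) -/
theorem ransac_stmt15 {Ω : Type*} [MeasurableSpace Ω] (ℙ : Measure Ω) [IsProbabilityMeasure ℙ]
    (n m d K : ℕ) (hn : 0 < n) (hm : 0 < m) (hd : 0 < d) (hK : 0 < K)
    (hdm : d + 1 ≤ m) (hKm : K * m ≤ n)
    (θ : Fin K → ℝ)
    (hθ : ∀ j : Fin K,
      θ j = ((K - (j : ℕ) : ℕ) : ℝ) * (m.choose (d + 1) : ℝ)
        / (((n - (j : ℕ) * m).choose (d + 1) : ℕ) : ℝ))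
    (I : Fin K → Ω → ℕ)
    (hmeas : ∀ (j : Fin K) (t : ℕ), MeasurableSet {ω | I j ω = t})
    (hgeo : ∀ (j : Fin K) (t : ℕ), 1 ≤ t →
      ℙ {ω | I j ω = t} = ENNReal.ofReal ((1 - θ j) ^ (t - 1) * θ j))
    (hindep : ∀ (T : Finset (Fin K)) (v : Fin K → ℕ),
      ℙ {ω | ∀ j ∈ T, I j ω = v j} = ∏ j ∈ T, ℙ {ω | I j ω = v j}) :
    ∫⁻ ω, ((∑ j : Fin K, I j ω : ℕ) : ℝ≥0∞) ∂ℙ = ∑ j : Fin K, ENNReal.ofReal (1 / θ j) ∧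
      ∑ j : Fin K, ENNReal.ofReal (1 / θ j)
        ≤ ENNReal.ofReal ((K : ℝ) * (n.choose (d + 1) : ℝ) / (m.choose (d + 1) : ℝ)) := by
  have hk : 0 < m.choose (d + 1) := Nat.choose_pos hdm
  have hsub : ∀ j : Fin K,
      (K - (j : ℕ)) * m.choose (d + 1) ≤ (n - (j : ℕ) * m).choose (d + 1) := fun j =>
    (mul_choose_succ_le _ m d).trans (Nat.choose_le_choose _ (by
      rw [Nat.sub_mul]
      omega))
  have hpos : ∀ j : Fin K, 0 < (K - (j : ℕ)) * m.choose (d + 1) := fun j =>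
    Nat.mul_pos (by omega) hk
  have hden : ∀ j : Fin K, (0 : ℝ) < ((n - (j : ℕ) * m).choose (d + 1) : ℕ) := fun j => by
    exact_mod_cast (hpos j).trans_le (hsub j)
  have h0 : ∀ j, 0 < θ j := fun j => by
    rw [hθ j]
    exact div_pos (by exact_mod_cast hpos j) (hden j)
  have h1 : ∀ j, θ j ≤ 1 := fun j => by
    rw [hθ j, div_le_one (hden j)]
    exact_mod_cast hsub j
  have hI : ∀ j, Measurable (I j) := fun j => measurable_to_countable' (hmeas j)
  constructor
  · simp only [Nat.cast_sum]
    rw [lintegral_finsetSum _ (fun j _ => by have := hI j; fun_prop)]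
    exact Finset.sum_congr rfl fun j _ =>
      lintegral_geometric ℙ (I j) (hI j) (θ j) (h0 j) (h1 j) (hgeo j)
  · rw [← ENNReal.ofReal_sum_of_nonneg (fun j _ => (one_div_pos.2 (h0 j)).le)]
    refine ENNReal.ofReal_le_ofReal ?_
    have hb : ∀ j ∈ (Finset.univ : Finset (Fin K)),
        1 / θ j ≤ (n.choose (d + 1) : ℝ) / (m.choose (d + 1) : ℝ) := fun j _ => by
      rw [hθ j, one_div_div]
      refine div_le_div₀ (by positivity) ?_ (by exact_mod_cast hk) ?_
      · exact_mod_cast Nat.choose_le_choose _ (Nat.sub_le _ _)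
      · exact_mod_cast Nat.le_mul_of_pos_left _ (by omega : 0 < K - (j : ℕ))
    refine (Finset.sum_le_card_nsmul _ _ _ hb).trans_eq ?_
    simp [mul_div_assoc]
end
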